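/- For every E > 0 there exists a constant C > 0, depending only on E, with the following property: if u : [0,∞) → ℝ is continuous, continuously differentiable on (0,∞), u(0) = kπ for some integer k, and the energy ∫₀^∞ [(1 + sin²(u(r))/r²)·u'(r)²/2 + sin²(u(r))/(2r²)]·r dr is at most E, then |u(r) − u(0)| ≤ C·min(1, r^{1/2}) for every r > 0. -/

import Mathlib

open MeasureTheory

/-!
Let `F` be the primitive of `|sin|` vanishing at `0`. Since `u 0 ∈ π ℤ`, the derivative of
`F (u r - u 0)` is `|sin (u r)| * u' r`. Two weighted AM-GM inequalities bound its absolute value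
by the energy density `e r` and by `r * e r + 1 / 2`, so `|F (u r - u 0)|` is at most
`(E + 1/2) * min 1 r`. The square root comes from inverting `F`, which is quadratic near `0`
and grows linearly at infinity.
-/

open Set Real
open scoped ENNReal

section LengthBound

variable {V : Type*} [NormedAddCommGroup V] [NormedSpace ℝ V] [CompleteSpace V]

lemma enorm_sub_le_lintegral_enorm_of_hasDerivAt_Ioo {f f' : ℝ → V} {a b : ℝ} (hab : a ≤ b)
    (hf : ContinuousOn f (Icc a b)) (hf' : ∀ x ∈ Ioo a b, HasDerivAt f (f' x) x) :
    ‖f b - f a‖ₑ ≤ ∫⁻ x in Ioo a b, ‖f' x‖ₑ := by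
  rcases eq_or_ne (∫⁻ x in Ioo a b, ‖f' x‖ₑ) ∞ with h_top | h_fin
  · exact h_top ▸ le_top
  have h_meas : AEStronglyMeasurable f' (volume.restrict (Ioo a b)) := by
    refine (aestronglyMeasurable_deriv f _).congr ?_
    filter_upwards [ae_restrict_mem measurableSet_Ioo] with x hx using (hf' x hx).deriv
  have h_int : IntervalIntegrable f' volume a b :=
    (intervalIntegrable_iff_integrableOn_Ioo_of_le hab).2 ⟨h_meas, h_fin.lt_top⟩
  rw [← intervalIntegral.integral_eq_sub_of_hasDerivAt_of_le hab hf hf' h_int,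
    intervalIntegral.integral_of_le hab, integral_Ioc_eq_integral_Ioo]
  exact enorm_integral_le_lintegral_enorm _

end LengthBound

section AbsSinPrimitive

/-- The primitive of `|sin|` vanishing at `0`. It turns bounds on `|sin u| * |u'|` into bounds
on `u`. -/
noncomputable def absSinPrimitive (x : ℝ) : ℝ := ∫ t in (0 : ℝ)..x, |sin t|

lemma intervalIntegrable_abs_sin (a b : ℝ) :
    IntervalIntegrable (fun t => |sin t|) volume a b :=
  continuous_sin.abs.intervalIntegrable a b

lemma hasDerivAt_absSinPrimitive (x : ℝ) : HasDerivAt absSinPrimitive |sin x| x :=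
  continuous_sin.abs.integral_hasStrictDerivAt 0 x |>.hasDerivAt

lemma continuous_absSinPrimitive : Continuous absSinPrimitive :=
  continuous_iff_continuousAt.2 fun x => (hasDerivAt_absSinPrimitive x).continuousAt

@[simp]
lemma absSinPrimitive_zero : absSinPrimitive 0 = 0 := intervalIntegral.integral_same

lemma absSinPrimitive_neg (x : ℝ) : absSinPrimitive (-x) = -absSinPrimitive x := by
  have h := intervalIntegral.integral_comp_neg (a := 0) (b := x) (fun t => |sin t|)
  simp only [sin_neg, abs_neg, neg_zero] at h
  rw [absSinPrimitive, absSinPrimitive, h, intervalIntegral.integral_symm]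

lemma absSinPrimitive_nonneg {x : ℝ} (hx : 0 ≤ x) : 0 ≤ absSinPrimitive x :=
  intervalIntegral.integral_nonneg hx fun t _ => abs_nonneg (sin t)

lemma abs_absSinPrimitive (x : ℝ) : |absSinPrimitive x| = absSinPrimitive |x| := by
  rw [← abs_of_nonneg (absSinPrimitive_nonneg (abs_nonneg x))]
  rcases abs_choice x with h | h <;> rw [h]
  rw [absSinPrimitive_neg, abs_neg]

lemma one_sub_cos_le_absSinPrimitive {x : ℝ} (hx : 0 ≤ x) : 1 - cos x ≤ absSinPrimitive x := by
  rw [← cos_zero, ← integral_sin]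
  exact intervalIntegral.integral_mono hx (continuous_sin.intervalIntegrable 0 x)
    (intervalIntegrable_abs_sin 0 x) fun t => le_abs_self (sin t)

lemma sub_sin_mul_cos_div_two_le_absSinPrimitive {x : ℝ} (hx : 0 ≤ x) :
    (x - sin x * cos x) / 2 ≤ absSinPrimitive x := by
  have h_sq : ∫ t in (0 : ℝ)..x, sin t ^ 2 = (x - sin x * cos x) / 2 := by
    rw [integral_sin_sq, sin_zero]
    ring
  rw [← h_sq]
  refine intervalIntegral.integral_mono hx ((continuous_sin.pow 2).intervalIntegrable 0 x)
    (intervalIntegrable_abs_sin 0 x) fun t => ?_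
  simpa only [sq_abs] using pow_le_of_le_one (abs_nonneg (sin t)) (abs_sin_le_one t) two_ne_zero

lemma le_pi_mul_sqrt_absSinPrimitive {x : ℝ} (hx : 0 ≤ x) (hxπ : x ≤ π) :
    x ≤ π * √(absSinPrimitive x / 2) := by
  have h_quad : 2 / π ^ 2 * x ^ 2 ≤ absSinPrimitive x := by
    have h_cos := cos_le_one_sub_mul_cos_sq ((abs_of_nonneg hx).trans_le hxπ)
    linarith [one_sub_cos_le_absSinPrimitive hx]
  rw [← div_le_iff₀' pi_pos]
  apply le_sqrt_of_sq_le
  calc (x / π) ^ 2 = 2 / π ^ 2 * x ^ 2 / 2 := by ring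
    _ ≤ absSinPrimitive x / 2 := by gcongr

lemma le_four_mul_absSinPrimitive {x : ℝ} (hx : 1 ≤ x) : x ≤ 4 * absSinPrimitive x := by
  have h_lower := sub_sin_mul_cos_div_two_le_absSinPrimitive (zero_le_one.trans hx)
  have h_osc : sin x * cos x ≤ 1 / 2 := by linarith [sin_two_mul x, sin_le_one (2 * x)]
  linarith

lemma abs_le_sqrt_add_abs_absSinPrimitive (x : ℝ) :
    |x| ≤ π * √(|absSinPrimitive x| / 2) + 4 * |absSinPrimitive x| := by
  have h_nonneg := absSinPrimitive_nonneg (abs_nonneg x)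
  rw [abs_absSinPrimitive]
  rcases le_total |x| π with h_small | h_large
  · exact (le_pi_mul_sqrt_absSinPrimitive (abs_nonneg x) h_small).trans
      (le_add_of_nonneg_right (by positivity))
  · exact (le_four_mul_absSinPrimitive (by linarith [pi_gt_three])).trans
      (le_add_of_nonneg_left (by positivity))

lemma abs_le_mul_sqrt_of_abs_absSinPrimitive_le {x A m : ℝ} (hA : 0 ≤ A) (hm : 0 ≤ m)
    (hm1 : m ≤ 1) (hx : |absSinPrimitive x| ≤ A * m) :
    |x| ≤ (π * √(A / 2) + 4 * A) * √m := by
  have h_sqrt : √(A * m / 2) = √(A / 2) * √m := by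
    rw [mul_div_right_comm, sqrt_mul (by positivity)]
  have h_le_sqrt : m ≤ √m := le_sqrt_of_sq_le (pow_le_of_le_one hm hm1 two_ne_zero)
  calc |x| ≤ π * √(|absSinPrimitive x| / 2) + 4 * |absSinPrimitive x| :=
        abs_le_sqrt_add_abs_absSinPrimitive x
    _ ≤ π * √(A * m / 2) + 4 * (A * m) := by gcongr
    _ ≤ π * (√(A / 2) * √m) + 4 * (A * √m) := by rw [h_sqrt]; gcongr
    _ = (π * √(A / 2) + 4 * A) * √m := by ring

lemma abs_sin_sub_int_mul_pi (x : ℝ) (k : ℤ) : |sin (x - k * π)| = |sin x| := by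
  rw [sin_sub_int_mul_pi, abs_mul, abs_neg_one_zpow, one_mul]

lemma enorm_absSinPrimitive_sub_le_lintegral {u : ℝ → ℝ} {a b : ℝ} {k : ℤ}
    (hab : a ≤ b) (hu : ContinuousOn u (Icc a b)) (hu' : DifferentiableOn ℝ u (Ioo a b))
    (hk : u a = k * π) :
    ‖absSinPrimitive (u b - u a)‖ₑ ≤ ∫⁻ r in Ioo a b, ‖sin (u r) * deriv u r‖ₑ := by
  have h_cont : ContinuousOn (fun r => absSinPrimitive (u r - u a)) (Icc a b) :=
    continuous_absSinPrimitive.comp_continuousOn (hu.sub continuousOn_const)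
  have h_deriv : ∀ r ∈ Ioo a b, HasDerivAt (fun r => absSinPrimitive (u r - u a))
      (|sin (u r)| * deriv u r) r := by
    intro r hr
    have h_u : HasDerivAt u (deriv u r) r :=
      (hu'.differentiableAt (Ioo_mem_nhds hr.1 hr.2)).hasDerivAt
    have h_comp := (hasDerivAt_absSinPrimitive (u r - u a)).comp r (h_u.sub_const (u a))
    rwa [hk, abs_sin_sub_int_mul_pi, ← hk] at h_comp
  simpa only [sub_self, absSinPrimitive_zero, sub_zero, enorm_mul, enorm_abs] using
    enorm_sub_le_lintegral_enorm_of_hasDerivAt_Ioo hab h_cont h_deriv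

end AbsSinPrimitive

section Energy

/-- The energy density of a configuration `u` with respect to `dr`: the weight `r` of the area
element `r dr` is included. -/
noncomputable def energyDensity (u : ℝ → ℝ) (r : ℝ) : ℝ :=
  ((1 + sin (u r) ^ 2 / r ^ 2) * deriv u r ^ 2 / 2 + sin (u r) ^ 2 / (2 * r ^ 2)) * r

/-- The energy of a configuration `u` on the half-line. It is valued in `ℝ≥0∞`, so that no
integrability has to be presupposed. -/
noncomputable def energy (u : ℝ → ℝ) : ℝ≥0∞ :=
  ∫⁻ r in Ioi (0 : ℝ), ENNReal.ofReal (energyDensity u r)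

variable {u : ℝ → ℝ} {r : ℝ}

lemma energyDensity_eq (u : ℝ → ℝ) (hr : 0 < r) :
    energyDensity u r = ((r * deriv u r) ^ 2 + (sin (u r) * deriv u r) ^ 2 + sin (u r) ^ 2)
      / (2 * r) := by
  rw [energyDensity]
  field_simp

lemma abs_sin_mul_deriv_le_energyDensity (u : ℝ → ℝ) (hr : 0 < r) :
    |sin (u r) * deriv u r| ≤ energyDensity u r := by
  rw [energyDensity_eq u hr, le_div_iff₀ (by positivity)]
  have h_amgm := two_mul_le_add_sq |r * deriv u r| |sin (u r)|
  rw [sq_abs, sq_abs, abs_mul, abs_of_pos hr] at h_amgm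
  rw [abs_mul]
  linarith [sq_nonneg (sin (u r) * deriv u r)]

lemma abs_sin_mul_deriv_le_mul_energyDensity_add (u : ℝ → ℝ) (hr : 0 < r) :
    |sin (u r) * deriv u r| ≤ r * energyDensity u r + 1 / 2 := by
  have h_cancel : r * energyDensity u r =
      ((r * deriv u r) ^ 2 + (sin (u r) * deriv u r) ^ 2 + sin (u r) ^ 2) / 2 := by
    rw [energyDensity_eq u hr]
    field_simp
  have h_amgm := two_mul_le_add_sq |sin (u r) * deriv u r| 1
  rw [sq_abs] at h_amgm
  linarith [sq_nonneg (r * deriv u r), sq_nonneg (sin (u r))]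

lemma lintegral_enorm_sin_mul_deriv_le_energy (u : ℝ → ℝ) (R : ℝ) :
    ∫⁻ r in Ioo 0 R, ‖sin (u r) * deriv u r‖ₑ ≤ energy u := by
  calc ∫⁻ r in Ioo 0 R, ‖sin (u r) * deriv u r‖ₑ
      ≤ ∫⁻ r in Ioo 0 R, ENNReal.ofReal (energyDensity u r) := by
        refine setLIntegral_mono' measurableSet_Ioo fun r hr => ?_
        rw [enorm_eq_ofReal_abs]
        exact ENNReal.ofReal_le_ofReal (abs_sin_mul_deriv_le_energyDensity u hr.1)
    _ ≤ energy u := lintegral_mono_set Ioo_subset_Ioi_self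

lemma lintegral_enorm_sin_mul_deriv_le_mul_energy_add (u : ℝ → ℝ) (R : ℝ) :
    ∫⁻ r in Ioo 0 R, ‖sin (u r) * deriv u r‖ₑ ≤ (energy u + 1 / 2) * ENNReal.ofReal R := by
  have h_pointwise : ∀ r ∈ Ioo 0 R, ‖sin (u r) * deriv u r‖ₑ ≤
      ENNReal.ofReal R * ENNReal.ofReal (energyDensity u r) + 1 / 2 := by
    intro r hr
    have h_nonneg : 0 ≤ energyDensity u r :=
      (abs_nonneg _).trans (abs_sin_mul_deriv_le_energyDensity u hr.1)
    have h_le : |sin (u r) * deriv u r| ≤ R * energyDensity u r + 1 / 2 :=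
      (abs_sin_mul_deriv_le_mul_energyDensity_add u hr.1).trans (by gcongr; exact hr.2.le)
    rw [enorm_eq_ofReal_abs, ← ENNReal.ofReal_mul (hr.1.trans hr.2).le]
    refine (ENNReal.ofReal_le_ofReal h_le).trans (ENNReal.ofReal_add_le.trans_eq ?_)
    rw [ENNReal.ofReal_div_of_pos two_pos, ENNReal.ofReal_one, ENNReal.ofReal_ofNat]
  calc ∫⁻ r in Ioo 0 R, ‖sin (u r) * deriv u r‖ₑ
      ≤ ∫⁻ r in Ioo 0 R, (ENNReal.ofReal R * ENNReal.ofReal (energyDensity u r) + 1 / 2) :=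
        setLIntegral_mono' measurableSet_Ioo h_pointwise
    _ = ENNReal.ofReal R * (∫⁻ r in Ioo 0 R, ENNReal.ofReal (energyDensity u r))
          + 1 / 2 * ENNReal.ofReal R := by
        rw [lintegral_add_right _ measurable_const, lintegral_const_mul' _ _ ENNReal.ofReal_ne_top,
          setLIntegral_const, volume_Ioo, sub_zero]
    _ ≤ ENNReal.ofReal R * energy u + 1 / 2 * ENNReal.ofReal R := by
        gcongr
        exact lintegral_mono_set Ioo_subset_Ioi_self
    _ = (energy u + 1 / 2) * ENNReal.ofReal R := by ring

lemma abs_absSinPrimitive_sub_le_of_energy_le {E : ℝ} {k : ℤ} (hE : 0 ≤ E)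
    (hu : ContinuousOn u (Ici 0)) (hu' : DifferentiableOn ℝ u (Ioi 0)) (hk : u 0 = k * π)
    (h_energy : energy u ≤ ENNReal.ofReal E) (hr : 0 ≤ r) :
    |absSinPrimitive (u r - u 0)| ≤ (E + 1 / 2) * min 1 r := by
  have h_lintegral := enorm_absSinPrimitive_sub_le_lintegral hr (hu.mono Icc_subset_Ici_self)
    (hu'.mono Ioo_subset_Ioi_self) hk
  rw [enorm_eq_ofReal_abs] at h_lintegral
  have h_far : |absSinPrimitive (u r - u 0)| ≤ E := by
    rw [← ENNReal.ofReal_le_ofReal_iff hE]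
    exact h_lintegral.trans ((lintegral_enorm_sin_mul_deriv_le_energy u r).trans h_energy)
  have h_near : |absSinPrimitive (u r - u 0)| ≤ (E + 1 / 2) * r := by
    rw [← ENNReal.ofReal_le_ofReal_iff (by positivity), ENNReal.ofReal_mul (by positivity),
      ENNReal.ofReal_add hE (by positivity), ENNReal.ofReal_div_of_pos two_pos,
      ENNReal.ofReal_one, ENNReal.ofReal_ofNat]
    refine h_lintegral.trans ((lintegral_enorm_sin_mul_deriv_le_mul_energy_add u r).trans ?_)
    gcongr
  rw [mul_min_of_nonneg _ _ (by positivity), mul_one]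
  exact le_min (by linarith) h_near

end Energy

theorem stmt_1_general (E : ℝ) (hE : 0 < E) :
    ∃ C : ℝ, 0 < C ∧
      ∀ (u : ℝ → ℝ) (k : ℤ),
        ContinuousOn u (Ici 0) →
        DifferentiableOn ℝ u (Ioi 0) →
        u 0 = k * π →
        energy u ≤ ENNReal.ofReal E →
        ∀ r : ℝ, 0 < r → |u r - u 0| ≤ C * min 1 √r := by
  refine ⟨π * √((E + 1 / 2) / 2) + 4 * (E + 1 / 2), by positivity, ?_⟩
  intro u k hu hu' hk h_energy r hr
  have h_primitive := abs_absSinPrimitive_sub_le_of_energy_le hE.le hu hu' hk h_energy hr.le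
  have h_sqrt_min : √(min 1 r) = min 1 √r := by rw [sqrt_monotone.map_min, sqrt_one]
  rw [← h_sqrt_min]
  exact abs_le_mul_sqrt_of_abs_absSinPrimitive_le (by positivity) (by positivity)
    (min_le_left 1 r) h_primitive

/-- For every energy bound `E > 0` there is `C > 0` depending only on `E` such that any
finite-energy equivariant configuration `u` with `u 0 = k·π` satisfies the decay estimate
`|u r - u 0| ≤ C · min 1 (√r)` for all `r > 0`. -/
theorem stmt_1 (E : ℝ) (hE : 0 < E) :
    ∃ C : ℝ, 0 < C ∧
      ∀ (u : ℝ → ℝ) (k : ℤ),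
        ContinuousOn u (Set.Ici 0) →
        ContDiffOn ℝ 1 u (Set.Ioi 0) →
        u 0 = (k : ℝ) * Real.pi →
        (∫⁻ r in Set.Ioi (0 : ℝ),
            ENNReal.ofReal (((1 + Real.sin (u r) ^ 2 / r ^ 2) * (deriv u r) ^ 2 / 2
              + Real.sin (u r) ^ 2 / (2 * r ^ 2)) * r)) ≤ ENNReal.ofReal E →
        ∀ r : ℝ, 0 < r → |u r - u 0| ≤ C * min 1 (Real.sqrt r) := by
  obtain ⟨C, hC, h_decay⟩ := stmt_1_general E hE
  exact ⟨C, hC, fun u k hu hu' => h_decay u k hu (hu'.differentiableOn one_ne_zero)⟩
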